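/- Let N ≥ 2 and z = j_{N/2−1}, and define Q_k as the sequence Q_k = (z² / (2 N ω_N G_N²)) · (ℓ_k² − N²/4) / ( ℓ_k + N/2 − z J_{ℓ_k+1}(z)/J_{ℓ_k}(z) ) with ℓ_k = k + N/2 − 1. Then Q_2 < Q_3 if and only if (z² − 2) N² + 5 z² N − 2 z⁴ > 0. -/

import Mathlib

open MeasureTheory Metric Set Filter Topology
open scoped RealInnerProductSpace

noncomputable section

abbrev euc (N : ℕ) := EuclideanSpace ℝ (Fin N)

/-- Bessel function of the first kind of order `ν`, via its power series. -/
def besselJ (ν : ℝ) (x : ℝ) : ℝ :=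
  ∑' m : ℕ, ((-1 : ℝ) ^ m / (m.factorial * Real.Gamma (m + ν + 1))) *
    (x / 2) ^ (2 * (m : ℝ) + ν)

/-- First positive zero of the Bessel function `J_ν`. -/
def besselJzero (ν : ℝ) : ℝ := sInf {x : ℝ | 0 < x ∧ besselJ ν x = 0}

/-- Volume of the unit ball of `ℝ^N`. -/
def ballVol (N : ℕ) : ℝ := (volume (ball (0 : euc N) 1)).toReal

/-- Perimeter: `(N-1)`-dimensional Hausdorff measure of the topological boundary. -/
def perim (N : ℕ) (Ω : Set (euc N)) : ℝ := (μH[(N : ℝ) - 1] (frontier Ω)).toReal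

/-- First Dirichlet Laplacian eigenvalue: infimum of Rayleigh quotients over nonzero
smooth functions compactly supported in `Ω`. -/
def firstEigenvalue (N : ℕ) (Ω : Set (euc N)) : ℝ :=
  sInf { R : ℝ | ∃ u : euc N → ℝ, ContDiff ℝ (⊤ : ℕ∞) u ∧ HasCompactSupport u ∧
    tsupport u ⊆ Ω ∧ u ≠ 0 ∧
    R = (∫ x, ‖gradient u x‖ ^ 2) / (∫ x, u x ^ 2) }

/-- Radius of the ball `Ω♯` with the same Lebesgue measure as `Ω`. -/
def sharpRadius (N : ℕ) (Ω : Set (euc N)) : ℝ :=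
  ((volume Ω).toReal / ballVol N) ^ ((1 : ℝ) / N)

/-- Isoperimetric deficit `δP(Ω) = Per(Ω)/Per(Ω♯) - 1`. -/
def perDeficit (N : ℕ) (Ω : Set (euc N)) : ℝ :=
  perim N Ω / perim N (ball (0 : euc N) (sharpRadius N Ω)) - 1

/-- Faber-Krahn deficit `δλ(Ω) = λ(Ω)/λ(Ω♯) - 1`. -/
def fkDeficit (N : ℕ) (Ω : Set (euc N)) : ℝ :=
  firstEigenvalue N Ω / firstEigenvalue N (ball (0 : euc N) (sharpRadius N Ω)) - 1

/-- A one-parameter family `Ω t` of subsets of `ℝ^N` smoothly converges to `Ω₀` as `t → 0`. -/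
structure SmoothlyConverges (N : ℕ) (Ω : ℝ → Set (euc N)) (Ω₀ : Set (euc N)) where
  δ : ℝ
  δ_pos : 0 < δ
  Φ : ℝ → euc N → euc N
  Φinv : ℝ → euc N → euc N
  left_inv : ∀ t ∈ Ico (0 : ℝ) δ, Function.LeftInverse (Φinv t) (Φ t)
  right_inv : ∀ t ∈ Ico (0 : ℝ) δ, Function.RightInverse (Φinv t) (Φ t)
  smooth_x : ∀ t ∈ Ico (0 : ℝ) δ, ContDiff ℝ (⊤ : ℕ∞) (Φ t)
  smooth_x_inv : ∀ t ∈ Ico (0 : ℝ) δ, ContDiff ℝ (⊤ : ℕ∞) (Φinv t)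
  smooth_t : ∀ x, ContDiffOn ℝ (⊤ : ℕ∞) (fun t => Φ t x) (Ico (0 : ℝ) δ)
  smooth_t_inv : ∀ x, ContDiffOn ℝ (⊤ : ℕ∞) (fun t => Φinv t x) (Ico (0 : ℝ) δ)
  init : Ω 0 = Ω₀
  image : ∀ t ∈ Ico (0 : ℝ) δ, Ω t = Φ t '' Ω₀

/-- The Laplacian of `f : ℝ^N → ℝ`, as the trace of the second derivative. -/
def lap (N : ℕ) (f : euc N → ℝ) (x : euc N) : ℝ :=
  ∑ i : Fin N,
    iteratedFDeriv ℝ 2 f x ![EuclideanSpace.single i 1, EuclideanSpace.single i 1]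

/-- The divergence of a vector field on `ℝ^N`. -/
def diver (N : ℕ) (f : euc N → euc N) (x : euc N) : ℝ :=
  ∑ i : Fin N, ⟪fderiv ℝ f x (EuclideanSpace.single i 1), (EuclideanSpace.single i 1 : euc N)⟫

/-- The constant `G_N`: the modulus of the gradient on the boundary of the normalized first
eigenfunction of the unit ball. -/
def GN (N : ℕ) : ℝ :=
  (besselJzero ((N : ℝ) / 2 - 1)) ^ 2 *
      deriv (besselJ ((N : ℝ) / 2 - 1)) (besselJzero ((N : ℝ) / 2 - 1)) /
    Real.sqrt (N * ballVol N *
      ∫ r in (0 : ℝ)..(besselJzero ((N : ℝ) / 2 - 1)), r * besselJ ((N : ℝ) / 2 - 1) r ^ 2)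

/-- The optimal constant `C_N` of the paper. -/
def CN (N : ℕ) : ℝ :=
  (N * (N + 1) *
      ∫ r in (0 : ℝ)..(besselJzero ((N : ℝ) / 2 - 1)), r * besselJ ((N : ℝ) / 2 - 1) r ^ 2) /
    (2 * (besselJzero ((N : ℝ) / 2 - 1) *
        deriv (besselJ ((N : ℝ) / 2 - 1)) (besselJzero ((N : ℝ) / 2 - 1))) ^ 2 *
      ((besselJzero ((N : ℝ) / 2 - 1)) ^ 2 - N))

end

noncomputable section

/-- The sequence `Q_k` of Lemma 2.3:
`Q_k = (j²_{N/2-1}/(2Nω_N G_N²)) (ℓ_k² - N²/4)/(ℓ_k + N/2 - j_{N/2-1} J_{ℓ_k+1}(j)/J_{ℓ_k}(j))`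
with `ℓ_k = k + N/2 - 1`. -/
def Qseq (N : ℕ) (k : ℕ) : ℝ :=
  besselJzero ((N : ℝ) / 2 - 1) ^ 2 / (2 * N * ballVol N * GN N ^ 2) *
    ((((k : ℝ) + N / 2 - 1) ^ 2 - (N : ℝ) ^ 2 / 4) /
      (((k : ℝ) + N / 2 - 1) + N / 2 -
        besselJzero ((N : ℝ) / 2 - 1) *
            besselJ (((k : ℝ) + N / 2 - 1) + 1) (besselJzero ((N : ℝ) / 2 - 1)) /
          besselJ ((k : ℝ) + N / 2 - 1) (besselJzero ((N : ℝ) / 2 - 1))))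

end

/-- Coefficients of the entire function attached to the Bessel function. -/
noncomputable def bc (μ : ℝ) (m : ℕ) : ℝ := (-1 : ℝ) ^ m / (m.factorial * Real.Gamma (m + μ + 1))

/-- The entire function `F` with `J_μ(x) = (x/2)^μ F_μ(x²/4)`. -/
noncomputable def bF (μ : ℝ) (t : ℝ) : ℝ := ∑' m : ℕ, bc μ m * t ^ m

lemma gamma_lower (μ : ℝ) (hμ : 0 ≤ μ) (m : ℕ) :
    Real.Gamma (μ + 1) ≤ Real.Gamma (m + μ + 1) := by
  induction m with
  | zero => simp
  | succ k ih =>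
    have hk : (0 : ℝ) ≤ k := Nat.cast_nonneg k
    have h1 : Real.Gamma ((k + 1 : ℕ) + μ + 1) = (k + μ + 1) * Real.Gamma (k + μ + 1) := by
      rw [← Real.Gamma_add_one (by positivity)]
      push_cast
      ring_nf
    have hp : 0 < Real.Gamma (k + μ + 1) := Real.Gamma_pos_of_pos (by positivity)
    rw [h1]
    nlinarith [mul_nonneg (add_nonneg hk hμ) hp.le]

lemma bc_abs (μ : ℝ) (hμ : 0 ≤ μ) (m : ℕ) :
    |bc μ m| ≤ (Real.Gamma (μ + 1))⁻¹ * ((m.factorial : ℝ))⁻¹ := by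
  have hp : 0 < Real.Gamma (μ + 1) := Real.Gamma_pos_of_pos (by positivity)
  have hl := gamma_lower μ hμ m
  have hp2 : 0 < Real.Gamma (m + μ + 1) := lt_of_lt_of_le hp hl
  have hf : (0 : ℝ) < m.factorial := by positivity
  unfold bc
  rw [abs_div, abs_pow, abs_neg, abs_one, one_pow, abs_of_pos (mul_pos hf hp2), one_div,
    mul_inv, mul_comm]
  gcongr

lemma bF_summable (μ : ℝ) (hμ : 0 ≤ μ) (t : ℝ) : Summable (fun m : ℕ => bc μ m * t ^ m) := by
  apply Summable.of_norm_bounded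
    (g := fun m : ℕ => (Real.Gamma (μ + 1))⁻¹ * (|t| ^ m / (m.factorial : ℝ)))
  · exact (Real.summable_pow_div_factorial |t|).mul_left _
  · intro m
    rw [Real.norm_eq_abs, abs_mul, abs_pow]
    calc |bc μ m| * |t| ^ m ≤ ((Real.Gamma (μ + 1))⁻¹ * ((m.factorial : ℝ))⁻¹) * |t| ^ m := by
          gcongr; exact bc_abs μ hμ m
      _ = _ := by ring

lemma bc_succ (μ : ℝ) (m : ℕ) : bc μ (m + 1) * ((m + 1 : ℕ) : ℝ) = - bc (μ + 1) m := by
  unfold bc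
  rw [Nat.factorial_succ]
  have h : ((m + 1 : ℕ) : ℝ) + μ + 1 = m + (μ + 1) + 1 := by push_cast; ring
  rw [h]
  have h1 : ((m + 1 : ℕ) : ℝ) ≠ 0 := by positivity
  have h2 : (m.factorial : ℝ) ≠ 0 := by positivity
  by_cases h3 : Real.Gamma (m + (μ + 1) + 1) = 0
  · simp [h3]
  push_cast at h1 ⊢
  field_simp
  ring

lemma bF_deriv (μ : ℝ) (hμ : 0 ≤ μ) (t : ℝ) : HasDerivAt (bF μ) (- bF (μ + 1) t) t := by
  set R : ℝ := |t| + 1 with hR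
  have hRpos : 0 < R := by positivity
  have key : HasDerivAt (fun z => ∑' m : ℕ, bc μ m * z ^ m)
      (∑' m : ℕ, bc μ m * ((m : ℝ) * t ^ (m - 1))) t := by
    apply hasDerivAt_tsum_of_isPreconnected
      (g := fun (m : ℕ) (z : ℝ) => bc μ m * z ^ m)
      (g' := fun (m : ℕ) (z : ℝ) => bc μ m * ((m : ℝ) * z ^ (m - 1)))
      (u := fun m : ℕ => (Real.Gamma (μ + 1))⁻¹ * ((m : ℝ) * R ^ (m - 1) / (m.factorial : ℝ)))
      (t := Metric.ball (0 : ℝ) R) (y₀ := 0)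
    · apply Summable.mul_left
      rw [← summable_nat_add_iff 1]
      refine (Real.summable_pow_div_factorial R).congr ?_
      intro m
      rw [Nat.factorial_succ]
      push_cast
      have h2 : (m.factorial : ℝ) ≠ 0 := by positivity
      have h1 : ((m : ℝ) + 1) ≠ 0 := by positivity
      field_simp
    · exact Metric.isOpen_ball
    · exact (convex_ball (0 : ℝ) R).isPreconnected
    · intro m y _
      exact (hasDerivAt_pow m y).const_mul _
    · intro m y hy
      have hy' : |y| ≤ R := by
        have := Metric.mem_ball.1 hy
        rw [Real.dist_eq, sub_zero] at this
        exact this.le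
      rw [Real.norm_eq_abs, abs_mul, abs_mul, abs_pow, Nat.abs_cast]
      calc |bc μ m| * ((m : ℝ) * |y| ^ (m - 1))
          ≤ ((Real.Gamma (μ + 1))⁻¹ * ((m.factorial : ℝ))⁻¹) * ((m : ℝ) * R ^ (m - 1)) := by
            have hG : 0 < Real.Gamma (μ + 1) := Real.Gamma_pos_of_pos (by positivity)
            gcongr
            exact bc_abs μ hμ m
        _ = _ := by ring
    · simpa using hRpos
    · exact bF_summable μ hμ 0
    · rw [Metric.mem_ball, Real.dist_eq, sub_zero, hR]
      linarith
  have hs : (∑' m : ℕ, bc μ m * ((m : ℝ) * t ^ (m - 1))) = - bF (μ + 1) t := by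
    have hsm : Summable (fun m : ℕ => bc μ (m + 1) * (((m + 1 : ℕ) : ℝ) * t ^ (m + 1 - 1))) := by
      refine (bF_summable (μ + 1) (by positivity) t).neg.congr ?_
      intro m
      rw [← mul_assoc, bc_succ]
      simp
    rw [((summable_nat_add_iff (f := fun m : ℕ => bc μ m * ((m : ℝ) * t ^ (m - 1))) 1).1
      hsm).tsum_eq_zero_add]
    unfold bF
    rw [← tsum_neg]
    simp only [Nat.cast_zero, zero_mul, mul_zero, zero_add]
    apply tsum_congr
    intro m
    rw [← mul_assoc, bc_succ]
    simp
  rw [hs] at key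
  exact key

lemma bF_rec (μ : ℝ) (hμ : 0 ≤ μ) (t : ℝ) :
    bF μ t + t * bF (μ + 2) t = (μ + 1) * bF (μ + 1) t := by
  have h0 := bF_summable μ hμ t
  have h1 := bF_summable (μ + 1) (by positivity) t
  have h2 := bF_summable (μ + 2) (by positivity) t
  unfold bF
  rw [h0.tsum_eq_zero_add, h1.tsum_eq_zero_add, mul_add, ← tsum_mul_left, ← tsum_mul_left,
    add_assoc, ← ((summable_nat_add_iff 1).2 h0).tsum_add (h2.mul_left t)]
  congr 1
  · unfold bc
    have hG : Real.Gamma (μ + 1) ≠ 0 := (Real.Gamma_pos_of_pos (by positivity)).ne'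
    have : Real.Gamma (μ + 1 + 1) = (μ + 1) * Real.Gamma (μ + 1) :=
      Real.Gamma_add_one (by positivity)
    have h3 : μ + 1 ≠ 0 := by positivity
    simp [this]
    field_simp
  · apply tsum_congr
    intro m
    unfold bc
    have e0 : ((m + 1 : ℕ) : ℝ) + μ + 1 = m + μ + 2 := by push_cast; ring
    have e1 : ((m + 1 : ℕ) : ℝ) + (μ + 1) + 1 = m + μ + 2 + 1 := by push_cast; ring
    have e2 : (m : ℝ) + (μ + 2) + 1 = m + μ + 2 + 1 := by ring
    have hm : (0 : ℝ) < m + μ + 2 := by positivity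
    rw [e0, e1, e2, Real.Gamma_add_one hm.ne', Nat.factorial_succ]
    have hG : Real.Gamma (m + μ + 2) ≠ 0 := (Real.Gamma_pos_of_pos hm).ne'
    have h2 : (m.factorial : ℝ) ≠ 0 := by positivity
    have h1 : ((m : ℝ) + 1) ≠ 0 := by positivity
    have hm' := hm.ne'
    push_cast
    field_simp
    ring

lemma bF_cont (μ : ℝ) (hμ : 0 ≤ μ) : Continuous (bF μ) :=
  continuous_iff_continuousAt.2 fun t => (bF_deriv μ hμ t).continuousAt

lemma bF_zero (μ : ℝ) : bF μ 0 = (Real.Gamma (μ + 1))⁻¹ := by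
  unfold bF
  rw [tsum_eq_single 0]
  · simp [bc]
  · intro m hm
    simp [hm]

lemma bF_zero_pos (μ : ℝ) (hμ : 0 ≤ μ) : 0 < bF μ 0 := by
  rw [bF_zero]
  exact inv_pos.2 (Real.Gamma_pos_of_pos (by positivity))

lemma bF_pos_step (μ : ℝ) (hμ : 0 ≤ μ) (T : ℝ) (h : ∀ t ∈ Set.Ioo 0 T, 0 < bF μ t) :
    ∀ t ∈ Set.Ioc 0 T, 0 < bF (μ + 1) t := by
  intro t ht
  have hmono : StrictMonoOn (fun s : ℝ => s ^ (μ + 1) * bF (μ + 1) s) (Set.Icc 0 T) := by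
    apply strictMonoOn_of_deriv_pos (convex_Icc 0 T)
    · apply Continuous.continuousOn
      exact (Real.continuous_rpow_const (by positivity)).mul (bF_cont _ (by positivity))
    · intro s hs
      rw [interior_Icc] at hs
      have hd := (Real.hasDerivAt_rpow_const (x := s) (p := μ + 1) (Or.inl hs.1.ne')).mul
        (bF_deriv (μ + 1) (by positivity) s)
      have hd' : deriv (fun s : ℝ => s ^ (μ + 1) * bF (μ + 1) s) s = _ := hd.deriv
      rw [hd']
      have hr := bF_rec μ hμ s
      have e : μ + 1 + 1 = μ + 2 := by ring
      have hp : s ^ (μ + 1) = s ^ μ * s := by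
        rw [Real.rpow_add hs.1, Real.rpow_one]
      rw [e, hp, show μ + 1 - 1 = μ by ring]
      have : (μ + 1) * s ^ μ * bF (μ + 1) s + s ^ μ * s * -bF (μ + 2) s = s ^ μ * bF μ s := by
        linear_combination (- s ^ μ) * hr
      rw [this]
      exact mul_pos (Real.rpow_pos_of_pos hs.1 _) (h s hs)
  have := hmono (Set.left_mem_Icc.2 (ht.1.le.trans ht.2)) ⟨ht.1.le, ht.2⟩ ht.1
  simp only [Real.zero_rpow (by positivity : μ + 1 ≠ 0), zero_mul] at this
  exact (pos_iff_pos_of_mul_pos this).1 (Real.rpow_pos_of_pos ht.1 _)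

lemma besselJ_eq (μ : ℝ) (hμ : 0 ≤ μ) (x : ℝ) (hx : 0 ≤ x) :
    besselJ μ x = (x / 2) ^ μ * bF μ (x ^ 2 / 4) := by
  unfold besselJ bF
  rw [← tsum_mul_left]
  apply tsum_congr
  intro m
  have h2 : (x / 2) ^ (2 * (m : ℝ) + μ) = (x ^ 2 / 4) ^ m * (x / 2) ^ μ := by
    rw [Real.rpow_add_of_nonneg (by positivity) (by positivity) hμ]
    congr 1
    rw [Real.rpow_mul (by positivity), Real.rpow_natCast]
    congr 1
    rw [show (2 : ℝ) = ((2 : ℕ) : ℝ) by norm_num, Real.rpow_natCast]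
    push_cast
    ring
  rw [h2]
  unfold bc
  ring

lemma bF_exists_zero (μ : ℝ) (hμ : 0 ≤ μ) : ∃ t, 0 < t ∧ bF μ t = 0 := by
  by_contra hcon
  push Not at hcon
  have hpos : ∀ t, 0 < t → 0 < bF μ t := by
    intro t ht
    by_contra hneg
    push Not at hneg
    obtain ⟨s, hs, hs0⟩ := intermediate_value_Icc' ht.le (bF_cont μ hμ).continuousOn
      (show (0 : ℝ) ∈ Set.Icc (bF μ t) (bF μ 0) from ⟨hneg, (bF_zero_pos μ hμ).le⟩)
    rcases hs.1.eq_or_lt with h | h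
    · rw [← h] at hs0
      exact (bF_zero_pos μ hμ).ne' hs0
    · exact hcon s h hs0
  have p1 : ∀ t, 0 < t → 0 < bF (μ + 1) t := fun t ht =>
    bF_pos_step μ hμ t (fun s hs => hpos s hs.1) t ⟨ht, le_rfl⟩
  have p2 : ∀ t, 0 < t → 0 < bF (μ + 1 + 1) t := fun t ht =>
    bF_pos_step _ (by positivity) t (fun s hs => p1 s hs.1) t ⟨ht, le_rfl⟩
  have p3 : ∀ t, 0 < t → 0 < bF (μ + 1 + 1 + 1) t := fun t ht =>
    bF_pos_step _ (by positivity) t (fun s hs => p2 s hs.1) t ⟨ht, le_rfl⟩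
  set t := (μ + 1) * (μ + 2) with ht
  have htp : 0 < t := by positivity
  have r1 := bF_rec μ hμ t
  have r2 := bF_rec (μ + 1) (by positivity) t
  have q0 := hpos t htp
  have q1 := p1 t htp
  have q2 := p2 t htp
  have q3 := p3 t htp
  rw [show μ + 1 + 1 + 1 = μ + 1 + 2 by ring] at q3
  rw [show μ + 1 + 1 = μ + 2 by ring] at q2 r2
  have m1 : 0 < (μ + 2) * bF μ t := by positivity
  have m2 : 0 < t * (t * bF (μ + 1 + 2) t) := by positivity
  have : (μ + 2) * bF μ t + t * (t * bF (μ + 1 + 2) t)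
      = ((μ + 1) * (μ + 2) - t) * bF (μ + 1) t := by
    linear_combination (μ + 2) * r1 + t * r2
  rw [← ht, sub_self, zero_mul] at this
  linarith

lemma zero_props (ν : ℝ) (hν : 0 ≤ ν) :
    0 < besselJzero ν ∧ bF ν (besselJzero ν ^ 2 / 4) = 0 ∧
      ∀ t ∈ Set.Ico 0 (besselJzero ν ^ 2 / 4), 0 < bF ν t := by
  have hset : {x : ℝ | 0 < x ∧ besselJ ν x = 0} = {x : ℝ | 0 ≤ x ∧ bF ν (x ^ 2 / 4) = 0} := by
    ext x
    constructor
    · rintro ⟨hx, h⟩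
      refine ⟨hx.le, ?_⟩
      rw [besselJ_eq ν hν x hx.le] at h
      exact (mul_eq_zero.1 h).resolve_left (Real.rpow_pos_of_pos (by positivity) _).ne'
    · rintro ⟨hx, h⟩
      refine ⟨?_, ?_⟩
      · rcases hx.eq_or_lt with h' | h'
        · rw [← h'] at h
          norm_num at h
          exact absurd h (bF_zero_pos ν hν).ne'
        · exact h'
      · rw [besselJ_eq ν hν x hx, h, mul_zero]
  have hcl : IsClosed {x : ℝ | 0 < x ∧ besselJ ν x = 0} := by
    rw [hset]
    exact (isClosed_le continuous_const continuous_id).inter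
      (isClosed_eq ((bF_cont ν hν).comp (by fun_prop)) continuous_const)
  have hbd : BddBelow {x : ℝ | 0 < x ∧ besselJ ν x = 0} := ⟨0, fun x hx => hx.1.le⟩
  have hne : {x : ℝ | 0 < x ∧ besselJ ν x = 0}.Nonempty := by
    obtain ⟨t, ht, h0⟩ := bF_exists_zero ν hν
    rw [hset]
    refine ⟨2 * Real.sqrt t, by positivity, ?_⟩
    rw [mul_pow, Real.sq_sqrt ht.le]
    rw [show (2 : ℝ) ^ 2 * t / 4 = t by ring]
    exact h0
  have hmem := hcl.csInf_mem hne hbd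
  change besselJzero ν ∈ _ at hmem
  have hmem2 := hmem
  rw [hset] at hmem2
  refine ⟨hmem.1, hmem2.2, ?_⟩
  intro t ht
  by_contra hneg
  push Not at hneg
  obtain ⟨s, hs, hs0⟩ := intermediate_value_Icc' ht.1 (bF_cont ν hν).continuousOn
    (show (0 : ℝ) ∈ Set.Icc (bF ν t) (bF ν 0) from ⟨hneg, (bF_zero_pos ν hν).le⟩)
  have hin : 2 * Real.sqrt s ∈ {x : ℝ | 0 < x ∧ besselJ ν x = 0} := by
    rw [hset]
    refine ⟨by positivity, ?_⟩
    rw [mul_pow, Real.sq_sqrt hs.1]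
    rw [show (2 : ℝ) ^ 2 * s / 4 = s by ring]
    exact hs0
  have hle : besselJzero ν ≤ 2 * Real.sqrt s := csInf_le hbd hin
  have hsq : besselJzero ν ^ 2 ≤ (2 * Real.sqrt s) ^ 2 := by
    have := hmem.1
    gcongr
  rw [mul_pow, Real.sq_sqrt hs.1] at hsq
  linarith [ht.2, hs.2]

lemma zero_lower (ν : ℝ) (hν : 0 ≤ ν) (T : ℝ) (hT : 0 < T) (h0 : bF ν T = 0)
    (h : ∀ t ∈ Set.Ioo 0 T, 0 < bF ν t) : ν + 1 < T := by
  have p1 := bF_pos_step ν hν T h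
  have p2 := bF_pos_step (ν + 1) (by positivity) T (fun t ht => p1 t ⟨ht.1, ht.2.le⟩)
  have hanti : StrictAntiOn (bF (ν + 1)) (Set.Icc 0 T) := by
    apply strictAntiOn_of_deriv_neg (convex_Icc 0 T) (bF_cont _ (by positivity)).continuousOn
    intro s hs
    rw [interior_Icc] at hs
    rw [(bF_deriv (ν + 1) (by positivity) s).deriv]
    exact neg_neg_of_pos (p2 s ⟨hs.1, hs.2.le⟩)
  have hmono : StrictMonoOn (fun t => bF ν t + t * bF (ν + 1) 0) (Set.Icc 0 T) := by
    apply strictMonoOn_of_deriv_pos (convex_Icc 0 T)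
    · exact ((bF_cont ν hν).add (continuous_id.mul continuous_const)).continuousOn
    · intro s hs
      rw [interior_Icc] at hs
      have hd := (bF_deriv ν hν s).add ((hasDerivAt_id s).mul_const (bF (ν + 1) 0))
      have hd' : deriv (fun t => bF ν t + t * bF (ν + 1) 0) s = _ := hd.deriv
      rw [hd']
      have := hanti (Set.left_mem_Icc.2 hT.le) ⟨hs.1.le, hs.2.le⟩ hs.1
      linarith
  have := hmono (Set.left_mem_Icc.2 hT.le) (Set.right_mem_Icc.2 hT.le) hT
  simp only [h0, zero_mul, add_zero, zero_add] at this
  have hr := bF_rec ν hν 0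
  rw [zero_mul, add_zero] at hr
  rw [hr] at this
  exact lt_of_mul_lt_mul_right this (bF_zero_pos (ν + 1) (by positivity)).le

lemma GN_sq_pos (N : ℕ) (hN : 2 ≤ N) : 0 < ballVol N ∧ 0 < GN N ^ 2 := by
  have hN' : (2 : ℝ) ≤ N := by exact_mod_cast hN
  have hb : 0 < ballVol N := by
    unfold ballVol
    exact ENNReal.toReal_pos (Metric.measure_ball_pos _ _ one_pos).ne' measure_ball_lt_top.ne
  refine ⟨hb, ?_⟩
  unfold GN
  set ν : ℝ := (N : ℝ) / 2 - 1 with hνd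
  have hν : 0 ≤ ν := by rw [hνd]; linarith
  obtain ⟨hz, hz0, hzpos⟩ := zero_props ν hν
  set z := besselJzero ν with hzd
  have hT : 0 < z ^ 2 / 4 := by positivity
  have p1 := bF_pos_step ν hν (z ^ 2 / 4) (fun t ht => hzpos t ⟨ht.1.le, ht.2⟩) _ ⟨hT, le_rfl⟩
  have hder : deriv (besselJ ν) z ≠ 0 := by
    have heq : besselJ ν =ᶠ[𝓝 z] fun x => (x / 2) ^ ν * bF ν (x ^ 2 / 4) := by
      filter_upwards [lt_mem_nhds hz] with x hx
      exact besselJ_eq ν hν x hx.le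
    rw [heq.deriv_eq]
    have d1 : HasDerivAt (fun x : ℝ => (x / 2) ^ ν) (1 / 2 * ν * (z / 2) ^ (ν - 1)) z :=
      ((hasDerivAt_id z).div_const 2).rpow_const (Or.inl (by simp [hz.ne']))
    have d2 : HasDerivAt (fun x : ℝ => x ^ 2 / 4) (z / 2) z := by
      have := (hasDerivAt_pow 2 z).div_const 4
      have e : ((2 : ℕ) : ℝ) * z ^ (2 - 1) / 4 = z / 2 := by
        norm_num
        ring
      rw [e] at this
      exact this
    have d3 : HasDerivAt (fun x : ℝ => bF ν (x ^ 2 / 4)) (-bF (ν + 1) (z ^ 2 / 4) * (z / 2)) z :=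
      HasDerivAt.comp (h₂ := bF ν) z (bF_deriv ν hν (z ^ 2 / 4)) d2
    have d4 : deriv (fun x => (x / 2) ^ ν * bF ν (x ^ 2 / 4)) z = _ := (d1.mul d3).deriv
    rw [d4, hz0, mul_zero, zero_add]
    have := Real.rpow_pos_of_pos (half_pos hz) ν
    exact mul_ne_zero this.ne' (mul_ne_zero (neg_ne_zero.2 p1.ne') (half_pos hz).ne')
  have hint : 0 < ∫ r in (0 : ℝ)..z, r * besselJ ν r ^ 2 := by
    apply intervalIntegral.intervalIntegral_pos_of_pos_on _ _ hz
    · apply ContinuousOn.intervalIntegrable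
      rw [Set.uIcc_of_le hz.le]
      have hc : Continuous (fun r : ℝ => r * ((r / 2) ^ ν * bF ν (r ^ 2 / 4)) ^ 2) := by
        have c1 : Continuous (fun r : ℝ => (r / 2) ^ ν) :=
          (Real.continuous_rpow_const hν).comp (continuous_id.div_const 2)
        have c2 : Continuous (fun r : ℝ => bF ν (r ^ 2 / 4)) :=
          (bF_cont ν hν).comp (by fun_prop)
        exact continuous_id.mul ((c1.mul c2).pow 2)
      refine hc.continuousOn.congr ?_
      intro r hr
      simp only [besselJ_eq ν hν r hr.1]
    · intro r hr
      have hr0 : 0 < r := hr.1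
      rw [besselJ_eq ν hν r hr0.le]
      have h1 : 0 < bF ν (r ^ 2 / 4) := by
        apply hzpos
        refine ⟨by positivity, ?_⟩
        have := pow_lt_pow_left₀ hr.2 hr0.le two_ne_zero
        linarith
      have h2 := Real.rpow_pos_of_pos (half_pos hr0) ν
      positivity
  have hs : 0 < Real.sqrt (N * ballVol N * ∫ r in (0 : ℝ)..z, r * besselJ ν r ^ 2) :=
    Real.sqrt_pos.2 (by positivity)
  have : z ^ 2 * deriv (besselJ ν) z /
      Real.sqrt (N * ballVol N * ∫ r in (0 : ℝ)..z, r * besselJ ν r ^ 2) ≠ 0 :=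
    div_ne_zero (mul_ne_zero (by positivity) hder) hs.ne'
  positivity

lemma ratio_eq (μ z : ℝ) (hμ : 0 ≤ μ) (hz : 0 < z) :
    z * besselJ (μ + 1) z / besselJ μ z
      = 2 * ((z ^ 2 / 4) * bF (μ + 1) (z ^ 2 / 4)) / bF μ (z ^ 2 / 4) := by
  rw [besselJ_eq μ hμ z hz.le, besselJ_eq (μ + 1) (by positivity) z hz.le,
    Real.rpow_add (half_pos hz), Real.rpow_one]
  have := (Real.rpow_pos_of_pos (half_pos hz) μ).ne'
  rw [show z * ((z / 2) ^ μ * (z / 2) * bF (μ + 1) (z ^ 2 / 4))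
    = (z / 2) ^ μ * (2 * ((z ^ 2 / 4) * bF (μ + 1) (z ^ 2 / 4))) by ring]
  exact mul_div_mul_left _ _ this

/-- **The key algebraic reduction of Lemma 2.3:** `Q_2 < Q_3` if and only if
`(z² - 2)N² + 5z²N - 2z⁴ > 0`, where `z = j_{N/2-1}`. -/
theorem Q2_lt_Q3_iff (N : ℕ) (hN : 2 ≤ N) :
    Qseq N 2 < Qseq N 3 ↔
      0 < (besselJzero ((N : ℝ) / 2 - 1) ^ 2 - 2) * (N : ℝ) ^ 2 +
          5 * besselJzero ((N : ℝ) / 2 - 1) ^ 2 * N -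
          2 * besselJzero ((N : ℝ) / 2 - 1) ^ 4 := by
  have hN' : (2 : ℝ) ≤ N := by exact_mod_cast hN
  obtain ⟨hb, hG⟩ := GN_sq_pos N hN
  unfold Qseq
  have hν : 0 ≤ (N : ℝ) / 2 - 1 := by linarith
  obtain ⟨hz, hz0, hzpos⟩ := zero_props _ hν
  set z := besselJzero ((N : ℝ) / 2 - 1) with hzd
  have hT : 0 < z ^ 2 / 4 := by positivity
  have hlow := zero_lower _ hν _ hT hz0 (fun t ht => hzpos t ⟨ht.1.le, ht.2⟩)
  have p1 := bF_pos_step _ hν (z ^ 2 / 4) (fun t ht => hzpos t ⟨ht.1.le, ht.2⟩)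
  have p2 := bF_pos_step _ (by linarith) (z ^ 2 / 4) (fun t ht => p1 t ⟨ht.1, ht.2.le⟩)
  have p3 := bF_pos_step _ (by linarith) (z ^ 2 / 4) (fun t ht => p2 t ⟨ht.1, ht.2.le⟩)
  have q1 := p1 _ ⟨hT, le_rfl⟩
  have q2 := p2 _ ⟨hT, le_rfl⟩
  have q3 := p3 _ ⟨hT, le_rfl⟩
  have r0 := bF_rec _ hν (z ^ 2 / 4)
  have r1 := bF_rec ((N : ℝ) / 2) (by linarith) (z ^ 2 / 4)
  have r2 := bF_rec ((N : ℝ) / 2 + 1) (by linarith) (z ^ 2 / 4)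
  rw [hz0] at r0
  push_cast
  rw [show (2 : ℝ) + N / 2 - 1 = N / 2 + 1 by ring, show (3 : ℝ) + N / 2 - 1 = N / 2 + 2 by ring]
  rw [ratio_eq _ z (by linarith) hz, ratio_eq _ z (by linarith) hz]
  rw [show (N : ℝ) / 2 - 1 + 1 = N / 2 by ring] at q1 q2 q3 r0
  rw [show (N : ℝ) / 2 - 1 + 2 = N / 2 + 1 by ring] at r0
  rw [show (N : ℝ) / 2 + 1 + 1 = N / 2 + 2 by ring] at q3 r2 ⊢
  rw [show (N : ℝ) / 2 + 1 + 2 = N / 2 + 2 + 1 by ring] at r2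
  have hK : 0 < z ^ 2 / (2 * N * ballVol N * GN N ^ 2) := by positivity
  rw [mul_lt_mul_iff_right₀ hK]
  have hNp : (0 : ℝ) < N := by linarith
  have hlow' : 2 * (N : ℝ) < z ^ 2 := by linarith
  set A := bF ((N : ℝ) / 2) (z ^ 2 / 4)
  set B := bF ((N : ℝ) / 2 + 1) (z ^ 2 / 4)
  set C := bF ((N : ℝ) / 2 + 2) (z ^ 2 / 4)
  set D := bF ((N : ℝ) / 2 + 2 + 1) (z ^ 2 / 4)
  have hA : A = z ^ 2 * B / (2 * N) := by
    field_simp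
    linarith
  have hC : z ^ 4 * C = 2 * A * (N * (N + 2) - z ^ 2) * 2 := by
    linear_combination 4 * z ^ 2 * r1 + 8 * (N + 2) * r0
  have hM : 0 < (N : ℝ) * (N + 2) - z ^ 2 := by
    by_contra hcon
    push Not at hcon
    have h1 : 0 < z ^ 4 * C := by positivity
    nlinarith
  have eC : C = 4 * A * (N * (N + 2) - z ^ 2) / z ^ 4 := by
    field_simp
    linarith
  have eB : B = 2 * N * A / z ^ 2 := by
    field_simp
    linarith
  have e1 : 2 * (z ^ 2 / 4 * C) / B = (N * (N + 2) - z ^ 2) / N := by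
    rw [eC, eB]
    field_simp
  have e2 : 2 * (z ^ 2 / 4 * D) / C = (N + 4) - N * z ^ 2 / (N * (N + 2) - z ^ 2) := by
    have hD : z ^ 2 / 4 * D = (N / 2 + 1 + 1) * C - B := by linarith
    rw [hD, eC, eB]
    have := hM.ne'
    field_simp
    ring
  have hz1 : 0 < z ^ 2 - N := by linarith
  have hz2 : 0 < z ^ 2 - 2 * N := by linarith
  have f2 : (((N : ℝ) / 2 + 1) ^ 2 - (N : ℝ) ^ 2 / 4) / ((N : ℝ) / 2 + 1 + N / 2 -
      2 * (z ^ 2 / 4 * C) / B) = N * (N + 1) / (z ^ 2 - N) := by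
    have hd : (N : ℝ) / 2 + 1 + N / 2 - 2 * (z ^ 2 / 4 * C) / B = (z ^ 2 - N) / N := by
      rw [e1]
      field_simp
      ring
    rw [hd]
    field_simp
    ring
  have f3 : (((N : ℝ) / 2 + 2) ^ 2 - (N : ℝ) ^ 2 / 4) / ((N : ℝ) / 2 + 2 + N / 2 -
      2 * (z ^ 2 / 4 * D) / C) = 2 * (N * (N + 2) - z ^ 2) / (z ^ 2 - 2 * N) := by
    have hd : (N : ℝ) / 2 + 2 + N / 2 - 2 * (z ^ 2 / 4 * D) / C
        = (N + 2) * (z ^ 2 - 2 * N) / (N * (N + 2) - z ^ 2) := by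
      rw [e2]
      have := hM.ne'
      field_simp
      ring
    rw [hd]
    have h1 := hM.ne'
    have h2 := hz2.ne'
    have h3 : (N : ℝ) + 2 ≠ 0 := by positivity
    rw [show ((N : ℝ) / 2 + 2) ^ 2 - (N : ℝ) ^ 2 / 4 = 2 * (N + 2) by ring]
    field_simp
  rw [f2, f3, div_lt_div_iff₀ hz1 hz2, ← sub_pos]
  apply iff_of_eq
  congr 1
  ring
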